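/- arXiv:2502.12500 — 3 statements merged into one kernel-verified Lean document; each statement's English description precedes it below -/
import Mathlib

section
/- Let g be a finite-dimensional real unimodular Lie algebra with a meta-abelian decomposition g = m ⊕ n and an LCK structure (J, ⟨·,·⟩, θ) such that θ ≠ 0, θ vanishes on n, and n + J(n) = g. Set a = n ∩ J(n) and let k be the orthogonal complement of a in n with respect to ⟨·,·⟩. Then J(k) is an abelian Lie subalgebra of g; in particular [Jv₁, Jv₂] = 0 for all v₁, v₂ ∈ k. -/
/-!
Since `n` is abelian, integrability gives `⁅J v₁, J v₂⁆ = J (⁅v₁, J v₂⁆ + ⁅J v₁, v₂⁆)` for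
`v₁, v₂ ∈ n`; all brackets lie in `n`, so this vector lies in `a = n ∩ J n`. In the same way `a` is
stable under `ad (J v)` for `v ∈ n`. When `v₁, v₂ ⟂ a` and `θ` is zero on `a`, evaluating
`dω = θ ∧ ω` on `J v₁`, `J v₂` and a vector of `a` leaves only the term `ω (⁅J v₁, J v₂⁆, ·)`.
Thus `J ⁅J v₁, J v₂⁆` is a vector of `a` orthogonal to `a`, hence zero.
-/

section Definitions

variable {R L : Type*} [CommRing R] [LieRing L] [LieAlgebra R L]

/-- Integrability of an endomorphism `J` of a Lie algebra: its Nijenhuis tensor vanishes. The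
condition `J ∘ J = -id` is not included. -/
def IsIntegrable (J : L →ₗ[R] L) : Prop :=
  ∀ x y : L, ⁅x, y⁆ - ⁅J x, J y⁆ + J ⁅x, J y⁆ + J ⁅J x, y⁆ = 0

/-- The equation `dω = θ ∧ ω` relating the fundamental form `ω` of an LCK structure to its Lee
form `θ`, where `d` is the Chevalley–Eilenberg differential. Closedness of `θ` is not included. -/
def LeeEquation (ω : L →ₗ[R] L →ₗ[R] R) (θ : L →ₗ[R] R) : Prop :=
  ∀ x y z : L, -(ω ⁅x, y⁆ z) - ω ⁅y, z⁆ x - ω ⁅z, x⁆ y =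
    θ x * ω y z + θ y * ω z x + θ z * ω x y

end Definitions

section InvariantPart

variable {R M : Type*} [Ring R] [AddCommGroup M] [Module R M] {J : M →ₗ[R] M} {n : Submodule R M}
  {x : M}

theorem mem_inf_map_iff (hJ2 : ∀ x, J (J x) = -x) : x ∈ n ⊓ n.map J ↔ x ∈ n ∧ J x ∈ n := by
  refine and_congr_right fun _ ↦ ⟨?_, fun hJx ↦ ⟨-J x, n.neg_mem hJx, ?_⟩⟩
  · rintro ⟨y, hy, rfl⟩
    simpa only [hJ2] using n.neg_mem hy
  · rw [map_neg, hJ2, neg_neg]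

theorem map_mem_inf_map (hJ2 : ∀ x, J (J x) = -x) (hx : x ∈ n ⊓ n.map J) :
    J x ∈ n ⊓ n.map J := by
  obtain ⟨hx, hJx⟩ := (mem_inf_map_iff hJ2).1 hx
  exact (mem_inf_map_iff hJ2).2 ⟨hJx, hJ2 x ▸ n.neg_mem hx⟩

end InvariantPart

section Bracket

variable {R L : Type*} [CommRing R] [LieRing L] [LieAlgebra R L] {J : L →ₗ[R] L}
  {n : Submodule R L}

theorem lie_mem_of_codisjoint {m : Submodule R L} (hmn : Codisjoint m n)
    (hm : ∀ x ∈ m, ∀ y ∈ m, ⁅x, y⁆ = 0) (hn : ∀ x : L, ∀ y ∈ n, ⁅x, y⁆ ∈ n) (x y : L) :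
    ⁅x, y⁆ ∈ n := by
  obtain ⟨x₁, x₂, hx₁, hx₂, rfl⟩ := Submodule.codisjoint_iff_exists_add_eq.1 hmn x
  obtain ⟨y₁, y₂, hy₁, hy₂, rfl⟩ := Submodule.codisjoint_iff_exists_add_eq.1 hmn y
  have hx₂y₁ : ⁅x₂, y₁⁆ ∈ n := by
    rw [← lie_skew]
    exact n.neg_mem (hn y₁ x₂ hx₂)
  rw [lie_add, add_lie, hm x₁ hx₁ y₁ hy₁, zero_add]
  exact n.add_mem hx₂y₁ (hn _ y₂ hy₂)

theorem IsIntegrable.lie_map_map (hJ : IsIntegrable J) {x y : L} (hxy : ⁅x, y⁆ = 0) :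
    ⁅J x, J y⁆ = J (⁅x, J y⁆ + ⁅J x, y⁆) := by
  have h := hJ x y
  rw [hxy, zero_sub, add_assoc, ← map_add] at h
  exact neg_add_eq_zero.1 h

theorem IsIntegrable.lie_map_mem_inf_map (hJ : IsIntegrable J) (hJ2 : ∀ x, J (J x) = -x)
    (hab : ∀ x ∈ n, ∀ y ∈ n, ⁅x, y⁆ = 0) (hbr : ∀ x y : L, ⁅x, y⁆ ∈ n)
    {v u : L} (hv : v ∈ n) (hu : u ∈ n ⊓ n.map J) : ⁅J v, u⁆ ∈ n ⊓ n.map J := by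
  obtain ⟨hu, hJu⟩ := (mem_inf_map_iff hJ2).1 hu
  have h : ⁅J v, J u⁆ = J ⁅J v, u⁆ := by
    rw [hJ.lie_map_map (hab v hv u hu), hab v hv (J u) hJu, zero_add]
  exact (mem_inf_map_iff hJ2).2 ⟨hbr _ _, h ▸ hbr _ _⟩

theorem IsIntegrable.lie_map_map_mem_inf_map (hJ : IsIntegrable J)
    (hbr : ∀ x y : L, ⁅x, y⁆ ∈ n) {v₁ v₂ : L} (hv : ⁅v₁, v₂⁆ = 0) :
    ⁅J v₁, J v₂⁆ ∈ n ⊓ n.map J := by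
  refine ⟨hbr _ _, ?_⟩
  rw [hJ.lie_map_map hv]
  exact Submodule.mem_map_of_mem (n.add_mem (hbr _ _) (hbr _ _))

theorem LeeEquation.map_lie_map_map_orthogonal {B : L →ₗ[R] L →ₗ[R] R} {θ : L →ₗ[R] R}
    (h : LeeEquation (B ∘ₗ J) θ) (hB : B.IsRefl) (hJ2 : ∀ x, J (J x) = -x)
    (hJB : ∀ x y, B (J x) (J y) = B x y) {a : Submodule R L} (hθ : ∀ u ∈ a, θ u = 0)
    {v₁ v₂ : L} (hv₁ : ∀ u ∈ a, B v₁ u = 0) (hv₂ : ∀ u ∈ a, B v₂ u = 0)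
    (had₁ : ∀ u ∈ a, ⁅J v₁, u⁆ ∈ a) (had₂ : ∀ u ∈ a, ⁅J v₂, u⁆ ∈ a) {u : L} (hu : u ∈ a) :
    B (J ⁅J v₁, J v₂⁆) u = 0 := by
  have hbr₂ : B (J ⁅J v₂, u⁆) (J v₁) = 0 := by
    rw [hJB]
    exact hB _ _ (hv₁ _ (had₂ u hu))
  have hbr₁ : B (J ⁅u, J v₁⁆) (J v₂) = 0 := by
    rw [hJB, ← lie_skew]
    exact hB _ _ (hv₂ _ (a.neg_mem (had₁ u hu)))
  have hω₂ : B (J (J v₂)) u = 0 := by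
    rw [hJ2, map_neg, LinearMap.neg_apply, hv₂ u hu, neg_zero]
  have hω₁ : B (J u) (J v₁) = 0 := by
    rw [hJB]
    exact hB _ _ (hv₁ u hu)
  simpa only [LinearMap.comp_apply, hbr₁, hbr₂, hω₁, hω₂, hθ u hu, mul_zero, zero_mul, add_zero,
    sub_zero, neg_eq_zero] using h (J v₁) (J v₂) u

end Bracket

theorem lck_Jk_abelian_general {R L : Type*} [CommRing R] [LieRing L] [LieAlgebra R L]
    {B : L →ₗ[R] L →ₗ[R] R} {J : L →ₗ[R] L} {θ : L →ₗ[R] R} {n k : Submodule R L}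
    (hB : B.IsRefl) (hBaniso : ∀ x, B x x = 0 → x = 0)
    (hJ2 : ∀ x, J (J x) = -x) (hJB : ∀ x y, B (J x) (J y) = B x y)
    (hJ : IsIntegrable J) (hLee : LeeEquation (B ∘ₗ J) θ)
    (hab : ∀ x ∈ n, ∀ y ∈ n, ⁅x, y⁆ = 0) (hbr : ∀ x y : L, ⁅x, y⁆ ∈ n)
    (hθ : ∀ x ∈ n ⊓ n.map J, θ x = 0)
    (hk : ∀ v, v ∈ k ↔ v ∈ n ∧ ∀ y ∈ n ⊓ n.map J, B v y = 0) :
    ∀ v₁ ∈ k, ∀ v₂ ∈ k, ⁅J v₁, J v₂⁆ = 0 := by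
  intro v₁ hv₁ v₂ hv₂
  obtain ⟨hn₁, horth₁⟩ := (hk v₁).1 hv₁
  obtain ⟨hn₂, horth₂⟩ := (hk v₂).1 hv₂
  have hmem : ⁅J v₁, J v₂⁆ ∈ n ⊓ n.map J :=
    hJ.lie_map_map_mem_inf_map hbr (hab v₁ hn₁ v₂ hn₂)
  have horth : ∀ u ∈ n ⊓ n.map J, B (J ⁅J v₁, J v₂⁆) u = 0 := fun _ ↦
    hLee.map_lie_map_map_orthogonal hB hJ2 hJB hθ horth₁ horth₂
      (fun _ ↦ hJ.lie_map_mem_inf_map hJ2 hab hbr hn₁)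
      (fun _ ↦ hJ.lie_map_mem_inf_map hJ2 hab hbr hn₂)
  apply hBaniso
  rw [← hJB]
  exact horth _ (map_mem_inf_map hJ2 hmem)

/-- For a non-Vaisman LCK structure on a unimodular meta-abelian Lie algebra
`g = m ⊕ n` with `n + J(n) = g`, the image `J(k)` of the orthogonal complement `k`
of `a = n ∩ J(n)` in `n` is an abelian Lie subalgebra: `⁅Jv₁, Jv₂⁆ = 0`. -/
theorem lck_Jk_abelian
    (g : Type*) [LieRing g] [LieAlgebra ℝ g] [FiniteDimensional ℝ g]
    (B : g →ₗ[ℝ] g →ₗ[ℝ] ℝ) (J : g →ₗ[ℝ] g) (θ : g →ₗ[ℝ] ℝ)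
    (hBsymm : ∀ x y : g, B x y = B y x)
    (hBpos : ∀ x : g, x ≠ 0 → 0 < B x x)
    (hJ2 : ∀ x : g, J (J x) = -x)
    (hJB : ∀ x y : g, B (J x) (J y) = B x y)
    (hJint : ∀ x y : g, ⁅x, y⁆ - ⁅J x, J y⁆ + J ⁅x, J y⁆ + J ⁅J x, y⁆ = 0)
    (hθbr : ∀ x y : g, θ ⁅x, y⁆ = 0)
    (hLCK : ∀ x y z : g,
      -(B (J ⁅x, y⁆) z) - B (J ⁅y, z⁆) x - B (J ⁅z, x⁆) y =
        θ x * B (J y) z + θ y * B (J z) x + θ z * B (J x) y)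
    (m n : Submodule ℝ g)
    (hcompl : IsCompl m n)
    (hnab : ∀ x ∈ n, ∀ y ∈ n, ⁅x, y⁆ = (0 : g))
    (hnideal : ∀ x : g, ∀ y ∈ n, ⁅x, y⁆ ∈ n)
    (hmab : ∀ x ∈ m, ∀ y ∈ m, ⁅x, y⁆ = (0 : g))
    (hunimod : ∀ x : g, LinearMap.trace ℝ g (LieAlgebra.ad ℝ g x) = 0)
    (hθ0 : θ ≠ 0)
    (hθn : ∀ x ∈ n, θ x = 0)
    (hspan : n ⊔ Submodule.map J n = ⊤)
    (k : Submodule ℝ g)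
    (hk : ∀ v : g, v ∈ k ↔ v ∈ n ∧ ∀ y ∈ n ⊓ Submodule.map J n, B v y = 0) :
    ∀ v₁ ∈ k, ∀ v₂ ∈ k, ⁅J v₁, J v₂⁆ = (0 : g) :=
  lck_Jk_abelian_general (fun x y h ↦ hBsymm x y ▸ h)
    (fun x h ↦ by_contra fun hx ↦ (hBpos x hx).ne' h) hJ2 hJB hJint hLCK hnab
    (lie_mem_of_codisjoint hcompl.codisjoint hmab hnideal) (fun x hx ↦ hθn x hx.1) hk
end

section
/- Let g be a finite-dimensional real unimodular Lie algebra with a meta-abelian decomposition g = m ⊕ n and an LCK structure (J, ⟨·,·⟩, θ) such that θ ≠ 0, θ vanishes on n, and n + J(n) = g. Set a = n ∩ J(n). Then for all u ∈ m and all x, y ∈ a one has ⟨[u, x], y⟩ + ⟨x, [u, y]⟩ = −θ(u)·⟨x, y⟩; that is, the operator x ↦ [u, x] + (θ(u)/2)·x on a is skew-symmetric with respect to ⟨·,·⟩. -/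
/-!
Write `u = w + J v` with `w, v ∈ n` and let `y ∈ a = n ∩ J n`. Since `n` is abelian, `w` acts
trivially on `y` and `J y`, and the vanishing of the Nijenhuis tensor at `(v, y)` reduces to
`⁅J v, J y⁆ = J ⁅J v, y⁆`; hence `ad u` commutes with `J` on `a`. For `x ∈ n`, evaluating
`dω = θ ∧ ω` on `(u, x, J y)` then leaves only `⟨⁅u, x⁆, y⟩`, `⟨⁅u, y⁆, x⟩` and `θ u ⟨x, y⟩`,
because `⁅x, J y⁆ = 0` and `θ` vanishes on `x` and `J y`.
-/

theorem map_mem_of_mem_inf_map {R M : Type*} [Ring R] [AddCommGroup M] [Module R M]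
    {J : M →ₗ[R] M} (hJ : ∀ x, J (J x) = -x) {n : Submodule R M} {x : M}
    (hx : x ∈ n ⊓ n.map J) : J x ∈ n := by
  obtain ⟨t, ht, rfl⟩ := Submodule.mem_map.1 hx.2
  rw [hJ]
  exact n.neg_mem ht

section LieAlgebra

variable {R g : Type*} [CommRing R] [LieRing g] [LieAlgebra R g]

/-- The Nijenhuis tensor of an endomorphism `J` of a Lie algebra vanishes, in the sign convention
for which, when `J² = -1`, this says that the complex structure `J` is integrable. -/
def IsNijenhuisFlat (J : g →ₗ[R] g) : Prop :=
  ∀ x y : g, ⁅x, y⁆ - ⁅J x, J y⁆ + J ⁅x, J y⁆ + J ⁅J x, y⁆ = 0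

/-- The equation `dω = θ ∧ ω` for a bilinear form `ω` and a linear form `θ`, where `d` is the
Chevalley–Eilenberg differential. For an LCK structure `ω` is `B ∘ₗ J` and `θ` is the Lee form.
The right-hand side is the cyclic sum, which is the wedge product when `ω` is alternating. -/
def IsLeeForm (ω : g →ₗ[R] g →ₗ[R] R) (θ : g →ₗ[R] R) : Prop :=
  ∀ x y z : g, -ω ⁅x, y⁆ z - ω ⁅y, z⁆ x - ω ⁅z, x⁆ y = θ x * ω y z + θ y * ω z x + θ z * ω x y

variable {B : g →ₗ[R] g →ₗ[R] R} {J : g →ₗ[R] g} {θ : g →ₗ[R] R} {n : Submodule R g} {u x y : g}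

theorem IsNijenhuisFlat.lie_map_map (hJint : IsNijenhuisFlat J) (hxy : ⁅x, y⁆ = 0)
    (hxJy : ⁅x, J y⁆ = 0) : ⁅J x, J y⁆ = J ⁅J x, y⁆ := by
  have h := hJint x y
  rw [hxy, hxJy, map_zero, add_zero, zero_sub, neg_add_eq_zero] at h
  exact h

theorem IsNijenhuisFlat.lie_map_of_mem_sup_map (hJint : IsNijenhuisFlat J)
    (hn : ∀ x ∈ n, ∀ y ∈ n, ⁅x, y⁆ = 0) (hu : u ∈ n ⊔ n.map J) (hy : y ∈ n) (hJy : J y ∈ n) :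
    ⁅u, J y⁆ = J ⁅u, y⁆ := by
  obtain ⟨w, hw, _, ⟨v, hv, rfl⟩, rfl⟩ := Submodule.mem_sup.1 hu
  calc ⁅w + J v, J y⁆ = ⁅J v, J y⁆ := by rw [add_lie, hn w hw _ hJy, zero_add]
    _ = J ⁅J v, y⁆ := hJint.lie_map_map (hn v hv y hy) (hn v hv _ hJy)
    _ = J ⁅w + J v, y⁆ := by rw [add_lie, hn w hw y hy, zero_add]

theorem IsLeeForm.lie_add_lie_of_lie_map (hθ : IsLeeForm (B ∘ₗ J) θ) (hJ : ∀ x, J (J x) = -x)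
    (hJB : ∀ x y, B (J x) (J y) = B x y) (huy : ⁅u, J y⁆ = J ⁅u, y⁆) (hxJy : ⁅x, J y⁆ = 0)
    (hθx : θ x = 0) (hθJy : θ (J y) = 0) :
    B ⁅u, x⁆ y + B ⁅u, y⁆ x = -(θ u * B x y) := by
  have hJlie : J ⁅J y, u⁆ = ⁅u, y⁆ := by rw [← lie_skew, huy, map_neg, hJ, neg_neg]
  have h := hθ u x (J y)
  simp only [LinearMap.comp_apply, hJB, hJlie, hxJy, hθx, hθJy, map_zero, LinearMap.zero_apply,
    zero_mul, add_zero, sub_zero] at h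
  linear_combination -h

theorem lck_ad_skew_on_a_general (hB : ∀ x y, B x y = B y x) (hJ : ∀ x, J (J x) = -x)
    (hJB : ∀ x y, B (J x) (J y) = B x y) (hJint : IsNijenhuisFlat J)
    (hθ : IsLeeForm (B ∘ₗ J) θ) (hn : ∀ x ∈ n, ∀ y ∈ n, ⁅x, y⁆ = 0) (hθn : ∀ x ∈ n, θ x = 0)
    (hu : u ∈ n ⊔ n.map J) (hx : x ∈ n) (hy : y ∈ n ⊓ n.map J) :
    B ⁅u, x⁆ y + B x ⁅u, y⁆ = -(θ u * B x y) := by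
  have hJy : J y ∈ n := map_mem_of_mem_inf_map hJ hy
  have hcomm : ⁅u, J y⁆ = J ⁅u, y⁆ := hJint.lie_map_of_mem_sup_map hn hu hy.1 hJy
  rw [hB x ⁅u, y⁆]
  exact hθ.lie_add_lie_of_lie_map hJ hJB hcomm (hn x hx _ hJy) (hθn x hx) (hθn _ hJy)

end LieAlgebra

/-- For a non-Vaisman LCK structure on a unimodular meta-abelian Lie algebra
`g = m ⊕ n` with `n + J(n) = g`, for `u ∈ m` and `x, y` in `a = n ∩ J(n)` one has
`⟨⁅u,x⁆, y⟩ + ⟨x, ⁅u,y⁆⟩ = -θ(u)·⟨x, y⟩`; equivalently `ad u + θ(u)/2` is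
skew-symmetric on `a`. -/
theorem lck_ad_skew_on_a
    (g : Type*) [LieRing g] [LieAlgebra ℝ g] [FiniteDimensional ℝ g]
    (B : g →ₗ[ℝ] g →ₗ[ℝ] ℝ) (J : g →ₗ[ℝ] g) (θ : g →ₗ[ℝ] ℝ)
    (hBsymm : ∀ x y : g, B x y = B y x)
    (hBpos : ∀ x : g, x ≠ 0 → 0 < B x x)
    (hJ2 : ∀ x : g, J (J x) = -x)
    (hJB : ∀ x y : g, B (J x) (J y) = B x y)
    (hJint : ∀ x y : g, ⁅x, y⁆ - ⁅J x, J y⁆ + J ⁅x, J y⁆ + J ⁅J x, y⁆ = 0)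
    (hθbr : ∀ x y : g, θ ⁅x, y⁆ = 0)
    (hLCK : ∀ x y z : g,
      -(B (J ⁅x, y⁆) z) - B (J ⁅y, z⁆) x - B (J ⁅z, x⁆) y =
        θ x * B (J y) z + θ y * B (J z) x + θ z * B (J x) y)
    (m n : Submodule ℝ g)
    (hcompl : IsCompl m n)
    (hnab : ∀ x ∈ n, ∀ y ∈ n, ⁅x, y⁆ = (0 : g))
    (hnideal : ∀ x : g, ∀ y ∈ n, ⁅x, y⁆ ∈ n)
    (hmab : ∀ x ∈ m, ∀ y ∈ m, ⁅x, y⁆ = (0 : g))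
    (hunimod : ∀ x : g, LinearMap.trace ℝ g (LieAlgebra.ad ℝ g x) = 0)
    (hθ0 : θ ≠ 0)
    (hθn : ∀ x ∈ n, θ x = 0)
    (hspan : n ⊔ Submodule.map J n = ⊤) :
    ∀ u ∈ m, ∀ x ∈ n ⊓ Submodule.map J n, ∀ y ∈ n ⊓ Submodule.map J n,
      B ⁅u, x⁆ y + B x ⁅u, y⁆ = -(θ u * B x y) := by
  intro u _ x hx y hy
  exact lck_ad_skew_on_a_general hBsymm hJ2 hJB hJint hLCK hnab hθn
    (hspan ▸ Submodule.mem_top) hx.1 hy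
end

section
/- Let g be a finite-dimensional real unimodular Lie algebra with a meta-abelian decomposition g = m ⊕ n and an LCK structure (J, ⟨·,·⟩, θ) such that θ ≠ 0, θ vanishes on n, n + J(n) = g, and a = n ∩ J(n) ≠ {0}. Let k be the orthogonal complement of a in n with respect to ⟨·,·⟩. Then the symmetric bilinear form κ on J(k) defined by κ(u₁, u₂) = trace of the linear operator k → k, x ↦ [u₁, [u₂, x]], is positive definite; in particular, for every nonzero u ∈ J(k) the trace of x ↦ [u, [u, x]] on k is strictly positive. -/
open Module
open scoped InnerProductSpace ComplexConjugate

/-!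
On `k` the product `v * w = ⁅J v, w⁆` is commutative and associative, by integrability of `J` and
because `n` is an abelian ideal containing `⁅g, g⁆`. On `a` the operator `ad (J v)` commutes with
`J` and scales the metric infinitesimally by `-θ (J v) / 2`, so unimodularity forces
`tr L_v = c λ(v)` for the multiplications `L_v w = v * w`, where `c = dim a / 2 > 0` and
`λ = θ ∘ J`. Hence the trace in question is `tr (L_v L_v) = tr L_{v * v} = c λ(v * v)`, and with
`λ = ⟨ξ, ·⟩` the equation `dω = θ ∧ ω` reads
`λ(v * w) = ⟨ξ * v, w⟩ + (|ξ|² ⟨v, w⟩ - ⟨ξ, v⟩ ⟨ξ, w⟩)`.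

By Cauchy–Schwarz it is enough that the symmetric operator `L_ξ` is positive semidefinite, with
`⟨ξ * ξ, ξ⟩ > 0` for the equality case `v ∥ ξ`. The orthogonal projection `π` onto the
`μ`-eigenspace of `L_ξ` commutes with all multiplications, so `L_{π ξ} = μ π`; taking traces,
`c |π ξ|² = μ dim (ker (L_ξ - μ))`, whence `μ ≥ 0`. Finally `c ⟨ξ * ξ, ξ⟩ = tr (L_ξ L_ξ) > 0`.
-/

section Trace

theorem trace_eq_trace_restrict_add_trace_restrict {K V : Type*} [Field K] [AddCommGroup V]
    [Module K V] [FiniteDimensional K V] {p q : Submodule K V} (hpq : Disjoint p q) {f : End K V}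
    (hf : ∀ x, f x ∈ p ⊔ q) (hp : ∀ x ∈ p, f x ∈ p) (hq : ∀ x ∈ q, f x ∈ q) :
    LinearMap.trace K V f =
      LinearMap.trace K p (f.restrict hp) + LinearMap.trace K q (f.restrict hq) := by
  obtain ⟨r, hpr, hrq⟩ := hpq.exists_isCompl
  set π : End K V := q.projection r hrq.symm
  have hπp : ∀ x ∈ p, π x = 0 := fun x hx =>
    (Submodule.projection_apply_eq_zero_iff hrq.symm).mpr (hpr hx)
  have hπq : ∀ x ∈ q, π x = x := fun x hx =>
    Submodule.projection_apply_of_mem_left hrq.symm hx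
  have hmem_q : ∀ x, (π * f) x ∈ q := fun x => Submodule.projection_apply_mem hrq.symm (f x)
  have hmem_p : ∀ x, (f - π * f) x ∈ p := by
    intro x
    obtain ⟨y, hy, z, hz, hyz⟩ := Submodule.mem_sup.mp (hf x)
    simpa [← hyz, hπp y hy, hπq z hz] using hy
  have hrestrict_p : (f - π * f).restrict (fun x _ => hmem_p x) = f.restrict hp := by
    ext x
    simp [hπp _ (hp x x.2)]
  have hrestrict_q : (π * f).restrict (fun x _ => hmem_q x) = f.restrict hq := by
    ext x
    simp [hπq _ (hq x x.2)]
  rw [← hrestrict_p, ← hrestrict_q, LinearMap.trace_restrict_eq_of_forall_mem p _ hmem_p,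
    LinearMap.trace_restrict_eq_of_forall_mem q _ hmem_q, ← map_add, sub_add_cancel]

end Trace

section SymmetricOperator

variable {𝕜 E : Type*} [RCLike 𝕜] [NormedAddCommGroup E] [InnerProductSpace 𝕜 E]
  [FiniteDimensional 𝕜 E]

theorem trace_starProjection (U : Submodule 𝕜 E) :
    LinearMap.trace 𝕜 E (U.starProjection : End 𝕜 E) = finrank 𝕜 U :=
  LinearMap.IsProj.trace
    ⟨U.starProjection_apply_mem, fun _ => Submodule.starProjection_eq_self_iff.mpr⟩

theorem isPositive_of_eigenvalue_nonneg {T : End 𝕜 E} (hT : T.IsSymmetric)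
    (h : ∀ μ : ℝ, T.HasEigenvalue (μ : 𝕜) → 0 ≤ μ) : T.IsPositive := by
  refine ⟨hT, fun x => ?_⟩
  have hexpand : ⟪T x, x⟫_𝕜 =
      ∑ i, ((hT.eigenvalues rfl i * ‖⟪hT.eigenvectorBasis rfl i, x⟫_𝕜‖ ^ 2 : ℝ) : 𝕜) := by
    rw [← (hT.eigenvectorBasis rfl).sum_inner_mul_inner]
    refine Finset.sum_congr rfl fun i _ => ?_
    rw [hT, hT.apply_eigenvectorBasis, inner_smul_right, mul_assoc,
      ← inner_conj_symm x, RCLike.conj_mul]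
    push_cast
    rfl
  rw [hexpand, ← RCLike.ofReal_sum, RCLike.ofReal_re]
  exact Finset.sum_nonneg fun i _ =>
    mul_nonneg (h _ (hT.hasEigenvalue_eigenvalues rfl i)) (sq_nonneg _)

theorem commute_starProjection_eigenspace {S T : End 𝕜 E} (hT : T.IsSymmetric)
    (h : Commute T S) {μ : 𝕜} (hμ : conj μ = μ) :
    Commute ((T.eigenspace μ).starProjection : End 𝕜 E) S := by
  have hTμ : (T - μ • 1).IsSymmetric := hT.sub (LinearMap.IsSymmetric.id.smul hμ)
  have horth : (T.eigenspace μ)ᗮ = (T - μ • 1).range := by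
    rw [End.eigenspace_def, ← hTμ.orthogonal_range, Submodule.orthogonal_orthogonal]
  have hidem := ContinuousLinearMap.IsIdempotentElem.toLinearMap
    (T.eigenspace μ).isIdempotentElem_starProjection
  rw [LinearMap.IsIdempotentElem.commute_iff hidem, Submodule.range_starProjection,
    Submodule.ker_starProjection, horth]
  refine ⟨End.mapsTo_genEigenspace_of_comm h μ 1, ?_⟩
  rintro _ ⟨x, rfl⟩
  exact ⟨S x, LinearMap.congr_fun (h.sub_left ((Commute.one_left S).smul_left μ)) x⟩

theorem mul_starProjection_eigenspace {mul : E →ₗ[𝕜] End 𝕜 E} (hcomm : ∀ v w, mul v w = mul w v)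
    (hmul : ∀ v w, mul (mul v w) = mul v * mul w) {ξ : E} (hξ : (mul ξ).IsSymmetric) {μ : 𝕜}
    (hμ : conj μ = μ) :
    mul (((mul ξ).eigenspace μ).starProjection ξ) =
      μ • (((mul ξ).eigenspace μ).starProjection : End 𝕜 E) := by
  set π : E →L[𝕜] E := ((mul ξ).eigenspace μ).starProjection
  have hπ (y : E) : Commute (π : End 𝕜 E) (mul y) := by
    refine commute_starProjection_eigenspace hξ ?_ hμ
    rw [commute_iff_eq, ← hmul, ← hmul, hcomm]
  ext y
  calc mul (π ξ) y = mul y (π ξ) := hcomm _ _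
    _ = π (mul y ξ) := (LinearMap.congr_fun (hπ y) ξ).symm
    _ = π (mul ξ y) := by rw [hcomm]
    _ = mul ξ (π y) := LinearMap.congr_fun (hπ ξ) y
    _ = μ • π y := End.mem_eigenspace_iff.mp (Submodule.starProjection_apply_mem _ y)

theorem trace_mul_self_pos {V : Type*} [NormedAddCommGroup V] [InnerProductSpace ℝ V]
    [FiniteDimensional ℝ V] {T : End ℝ V} (hT : T.IsSymmetric) (hT0 : T ≠ 0) :
    0 < LinearMap.trace ℝ V (T * T) := by
  let b := stdOrthonormalBasis ℝ V
  have hsum : LinearMap.trace ℝ V (T * T) = ∑ i, ‖T (b i)‖ ^ 2 := by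
    rw [LinearMap.trace_eq_sum_inner _ b]
    refine Finset.sum_congr rfl fun i _ => ?_
    rw [End.mul_apply, ← hT, real_inner_self_eq_norm_sq]
  obtain ⟨i, hi⟩ : ∃ i, T (b i) ≠ 0 := by
    by_contra! h
    exact hT0 (b.toBasis.ext fun i => by simpa using h i)
  rw [hsum]
  exact Finset.sum_pos' (fun i _ => sq_nonneg _) ⟨i, Finset.mem_univ i, by positivity⟩

end SymmetricOperator

/-- `B` is an inner product, as a predicate on bilinear forms: a Lie algebra cannot carry
`NormedAddCommGroup` without a second, unrelated addition. -/
structure IsInnerProduct {V : Type*} [AddCommGroup V] [Module ℝ V] (B : LinearMap.BilinForm ℝ V) :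
    Prop where
  symm : ∀ x y, B x y = B y x
  pos : ∀ x, x ≠ 0 → 0 < B x x

namespace IsInnerProduct

variable {V : Type*} [AddCommGroup V] [Module ℝ V] {B : LinearMap.BilinForm ℝ V}

theorem eq_zero_of_self (hB : IsInnerProduct B) {x : V} (hx : B x x = 0) : x = 0 := by
  by_contra hx0
  exact (hB.pos x hx0).ne' hx

theorem restrict (hB : IsInnerProduct B) (p : Submodule ℝ V) : IsInnerProduct (B.restrict p) where
  symm x y := hB.symm x y
  pos x hx := hB.pos x (by simpa using hx)

/-- The inner product space structure given by `B`. -/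
abbrev core (hB : IsInnerProduct B) : InnerProductSpace.Core ℝ V where
  inner x y := B x y
  conj_inner_symm x y := hB.symm y x
  re_inner_nonneg x := by
    rcases eq_or_ne x 0 with rfl | hx
    · simp
    · exact (hB.pos x hx).le
  add_left := by simp
  smul_left := by simp
  definite _ := hB.eq_zero_of_self

variable [FiniteDimensional ℝ V]

theorem trace_eq_finrank_mul (hB : IsInnerProduct B) {A : End ℝ V} {t : ℝ}
    (h : ∀ x, B x (A x) = t * B x x) : LinearMap.trace ℝ V A = finrank ℝ V * t := by
  let _ := hB.core.toNormedAddCommGroup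
  let _ := InnerProductSpace.ofCore hB.core.toCore
  have hinner (x : V) : ⟪x, A x⟫_ℝ = t * ⟪x, x⟫_ℝ := h x
  rw [A.trace_eq_sum_inner (stdOrthonormalBasis ℝ V)]
  simp [hinner]

theorem isCompl_orthogonal (hB : IsInnerProduct B) (p : Submodule ℝ V) :
    IsCompl p (B.orthogonal p) := by
  refine (LinearMap.BilinForm.isCompl_orthogonal_iff_disjoint fun x y hxy => ?_).mpr ?_
  · rwa [hB.symm]
  · exact Submodule.disjoint_def.mpr fun x hx hxo => hB.eq_zero_of_self (hxo x hx)

end IsInnerProduct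

/-- The algebraic structure carried by `k`: a commutative associative product `mul` on `V`, a form
`B` and a linear form `lee` linked by the identity to which `dω = θ ∧ ω` reduces, with the traces
of multiplications proportional to `lee`. -/
structure IsLeeProduct {V : Type*} [AddCommGroup V] [Module ℝ V] (B : LinearMap.BilinForm ℝ V)
    (mul : V →ₗ[ℝ] End ℝ V) (lee : Dual ℝ V) (c : ℝ) : Prop where
  mul_comm : ∀ v w, mul v w = mul w v
  mul_mul : ∀ v w, mul (mul v w) = mul v * mul w
  form_mul : ∀ u v w, B (mul w v) u + lee w * B u v = B (mul u v) w + lee u * B v w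
  trace_mul : ∀ v, LinearMap.trace ℝ V (mul v) = c * lee v

namespace IsLeeProduct

section InnerProductSpace

variable {V : Type*} [NormedAddCommGroup V] [InnerProductSpace ℝ V] {mul : V →ₗ[ℝ] End ℝ V}
  {ξ : V} {c : ℝ}

theorem inner_lee_mul (h : IsLeeProduct (innerₗ V) mul (innerₗ V ξ) c) (v w : V) :
    ⟪ξ, mul v w⟫_ℝ = ⟪mul ξ v, w⟫_ℝ + (⟪ξ, ξ⟫_ℝ * ⟪v, w⟫_ℝ - ⟪ξ, v⟫_ℝ * ⟪ξ, w⟫_ℝ) := by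
  have hform := h.form_mul ξ v w
  simp only [innerₗ_apply_apply] at hform
  rw [h.mul_comm w v, real_inner_comm ξ (mul v w)] at hform
  linarith

theorem isSymmetric_mul_lee (h : IsLeeProduct (innerₗ V) mul (innerₗ V ξ) c) :
    (mul ξ).IsSymmetric := by
  intro v w
  have hvw := h.inner_lee_mul v w
  have hwv := h.inner_lee_mul w v
  rw [h.mul_comm w v, real_inner_comm v w] at hwv
  rw [real_inner_comm (mul ξ w) v]
  linarith

variable [FiniteDimensional ℝ V]

theorem eigenvalue_mul_finrank (h : IsLeeProduct (innerₗ V) mul (innerₗ V ξ) c) (μ : ℝ) :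
    μ * finrank ℝ ((mul ξ).eigenspace μ) =
      c * ‖((mul ξ).eigenspace μ).starProjection ξ‖ ^ 2 := by
  set U := (mul ξ).eigenspace μ
  calc μ * finrank ℝ U = LinearMap.trace ℝ V (μ • (U.starProjection : End ℝ V)) := by
        rw [map_smul, trace_starProjection, smul_eq_mul]
    _ = LinearMap.trace ℝ V (mul (U.starProjection ξ)) := by
        rw [mul_starProjection_eigenspace h.mul_comm h.mul_mul h.isSymmetric_mul_lee rfl]
    _ = c * ⟪ξ, U.starProjection ξ⟫_ℝ := h.trace_mul _
    _ = c * ‖U.starProjection ξ‖ ^ 2 := by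
        rw [← real_inner_self_eq_norm_sq, Submodule.inner_starProjection_left_eq_right,
          Submodule.starProjection_eq_self_iff.mpr (Submodule.starProjection_apply_mem _ _)]

theorem isPositive_mul_lee (h : IsLeeProduct (innerₗ V) mul (innerₗ V ξ) c) (hc : 0 ≤ c) :
    (mul ξ).IsPositive := by
  refine isPositive_of_eigenvalue_nonneg h.isSymmetric_mul_lee fun μ hμ => ?_
  have hfinrank : (0 : ℝ) < finrank ℝ ((mul ξ).eigenspace μ) :=
    Nat.cast_pos.mpr (Submodule.one_le_finrank_iff.mpr hμ)
  refine nonneg_of_mul_nonneg_left ?_ hfinrank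
  rw [h.eigenvalue_mul_finrank]
  positivity

theorem inner_mul_lee_lee_pos (h : IsLeeProduct (innerₗ V) mul (innerₗ V ξ) c) (hc : 0 < c)
    (hξ : ξ ≠ 0) : 0 < ⟪mul ξ ξ, ξ⟫_ℝ := by
  have hne : mul ξ ≠ 0 := by
    intro h0
    have htrace := h.trace_mul ξ
    rw [h0, map_zero] at htrace
    exact (mul_pos hc (real_inner_self_pos.mpr hξ)).ne htrace
  have hpos := trace_mul_self_pos h.isSymmetric_mul_lee hne
  rw [← h.mul_mul, h.trace_mul, innerₗ_apply_apply, real_inner_comm] at hpos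
  exact pos_of_mul_pos_right hpos hc.le

theorem inner_lee_mul_self_pos (h : IsLeeProduct (innerₗ V) mul (innerₗ V ξ) c) (hc : 0 < c)
    (hξ : ξ ≠ 0) {v : V} (hv : v ≠ 0) : 0 < ⟪ξ, mul v v⟫_ℝ := by
  rw [h.inner_lee_mul]
  have hCS := real_inner_mul_inner_self_le ξ v
  by_cases hdep : ∃ r : ℝ, r ≠ 0 ∧ v = r • ξ
  · obtain ⟨r, hr, rfl⟩ := hdep
    have hpos : 0 < ⟪mul ξ (r • ξ), r • ξ⟫_ℝ := by
      rw [map_smul, real_inner_smul_left, real_inner_smul_right, ← mul_assoc]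
      exact mul_pos (mul_self_pos.mpr hr) (h.inner_mul_lee_lee_pos hc hξ)
    linarith
  · have hCSne : ⟪ξ, v⟫_ℝ * ⟪ξ, v⟫_ℝ ≠ ⟪ξ, ξ⟫_ℝ * ⟪v, v⟫_ℝ := by
      intro heq
      refine hdep ((norm_inner_eq_norm_iff (𝕜 := ℝ) hξ hv).mp ?_)
      rw [real_inner_self_eq_norm_mul_norm, real_inner_self_eq_norm_mul_norm] at heq
      refine (mul_self_inj (norm_nonneg _) (by positivity)).mp ?_
      rw [Real.norm_eq_abs, abs_mul_abs_self, heq]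
      ring
    have hnonneg : 0 ≤ ⟪mul ξ v, v⟫_ℝ := (h.isPositive_mul_lee hc.le).inner_nonneg_left v
    have hCSlt := lt_of_le_of_ne hCS hCSne
    linarith

end InnerProductSpace

theorem trace_mul_mul_self_pos {V : Type*} [AddCommGroup V] [Module ℝ V] [FiniteDimensional ℝ V]
    {B : LinearMap.BilinForm ℝ V} {mul : V →ₗ[ℝ] End ℝ V} {lee : Dual ℝ V} {c : ℝ}
    (h : IsLeeProduct B mul lee c) (hB : IsInnerProduct B) (hc : 0 < c) (hlee : lee ≠ 0) {v : V}
    (hv : v ≠ 0) : 0 < LinearMap.trace ℝ V (mul v * mul v) := by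
  let _ := hB.core.toNormedAddCommGroup
  let _ := InnerProductSpace.ofCore hB.core.toCore
  obtain ⟨ξ, rfl⟩ : ∃ ξ, innerₗ V ξ = lee :=
    ⟨(InnerProductSpace.toDual ℝ V).symm lee.toContinuousLinearMap,
      LinearMap.ext fun x => by simp [innerₗ_apply_apply, InnerProductSpace.toDual_symm_apply]⟩
  have hξ : ξ ≠ 0 := by
    rintro rfl
    exact hlee (map_zero _)
  rw [← h.mul_mul, h.trace_mul]
  exact mul_pos hc (inner_lee_mul_self_pos h hc hξ hv)

end IsLeeProduct

section LieAlgebra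

variable {g : Type*} [LieRing g] [LieAlgebra ℝ g]

/-- A complex structure on a Lie algebra: an almost complex structure with vanishing Nijenhuis
tensor. -/
structure IsComplexStructure (J : End ℝ g) : Prop where
  map_map : ∀ x : g, J (J x) = -x
  integrable : ∀ x y : g, ⁅x, y⁆ - ⁅J x, J y⁆ + J ⁅x, J y⁆ + J ⁅J x, y⁆ = 0

/-- An LCK structure on a Lie algebra, with Lee form `θ`. The last field is `dω = θ ∧ ω` for the
fundamental form `ω(x, y) = B (J x) y`. -/
structure IsLCK (B : LinearMap.BilinForm ℝ g) (J : End ℝ g) (θ : Dual ℝ g) : Prop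
    extends IsComplexStructure J, IsInnerProduct B where
  form_map_map : ∀ x y : g, B (J x) (J y) = B x y
  lee_lie : ∀ x y : g, θ ⁅x, y⁆ = 0
  d_fundamentalForm : ∀ x y z : g,
    -(B (J ⁅x, y⁆) z) - B (J ⁅y, z⁆) x - B (J ⁅z, x⁆) y =
      θ x * B (J y) z + θ y * B (J z) x + θ z * B (J x) y

/-- The abelian ideal `n` of a meta-abelian decomposition `g = m ⊕ n`, characterised without
reference to `m`: it is abelian and contains the derived algebra. -/
structure IsMetaabelianIdeal (n : Submodule ℝ g) : Prop where
  lie_mem : ∀ x y : g, ⁅x, y⁆ ∈ n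
  lie_eq_zero : ∀ x ∈ n, ∀ y ∈ n, ⁅x, y⁆ = 0

/-- An LCK structure on a meta-abelian Lie algebra whose Lee form vanishes on the abelian ideal
`n`. -/
structure IsMetaabelianLCK (B : LinearMap.BilinForm ℝ g) (J : End ℝ g) (θ : Dual ℝ g)
    (n : Submodule ℝ g) : Prop extends IsLCK B J θ, IsMetaabelianIdeal n where
  lee_eq_zero : ∀ x ∈ n, θ x = 0

/-- The maximal `J`-invariant subspace `a = n ∩ J(n)` of `n`. -/
def complexPart (J : End ℝ g) (n : Submodule ℝ g) : Submodule ℝ g :=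
  n ⊓ n.map J

/-- The orthogonal complement `k` of `a = n ∩ J(n)` in `n`; it meets `J(k)` trivially. -/
def totallyRealPart (B : LinearMap.BilinForm ℝ g) (J : End ℝ g) (n : Submodule ℝ g) :
    Submodule ℝ g :=
  n ⊓ B.orthogonal (complexPart J n)

variable {B : LinearMap.BilinForm ℝ g} {J : End ℝ g} {θ : Dual ℝ g} {m n : Submodule ℝ g}
  {u v w x y : g}

theorem IsMetaabelianIdeal.of_sup_eq_top (hsup : m ⊔ n = ⊤)
    (hm : ∀ x ∈ m, ∀ y ∈ m, ⁅x, y⁆ = 0) (hn : ∀ x ∈ n, ∀ y ∈ n, ⁅x, y⁆ = 0)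
    (hideal : ∀ x : g, ∀ y ∈ n, ⁅x, y⁆ ∈ n) : IsMetaabelianIdeal n := by
  refine ⟨fun x y => ?_, hn⟩
  obtain ⟨x₁, hx₁, x₂, hx₂, rfl⟩ := Submodule.mem_sup.mp (hsup ▸ Submodule.mem_top : x ∈ m ⊔ n)
  obtain ⟨y₁, hy₁, y₂, hy₂, rfl⟩ := Submodule.mem_sup.mp (hsup ▸ Submodule.mem_top : y ∈ m ⊔ n)
  rw [lie_add, add_lie, hm x₁ hx₁ y₁ hy₁, zero_add, ← lie_skew]
  exact n.add_mem (n.neg_mem (hideal y₁ x₂ hx₂)) (hideal _ y₂ hy₂)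

namespace IsComplexStructure

theorem lie_map_map (h : IsComplexStructure J) (hxy : ⁅x, y⁆ = 0) :
    ⁅J x, J y⁆ = J (⁅x, J y⁆ + ⁅J x, y⁆) := by
  have hN := h.integrable x y
  rw [hxy] at hN
  rw [map_add, ← sub_eq_zero, ← neg_eq_zero, ← hN]
  abel

theorem mem_complexPart (h : IsComplexStructure J) (hx : x ∈ n) (hJx : J x ∈ n) :
    x ∈ complexPart J n :=
  ⟨hx, -J x, n.neg_mem hJx, by rw [map_neg, h.map_map, neg_neg]⟩

theorem map_mem_complexPart (h : IsComplexStructure J) (hx : x ∈ complexPart J n) :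
    J x ∈ complexPart J n := by
  obtain ⟨hxn, y, hy, rfl⟩ := hx
  exact ⟨by rw [h.map_map]; exact n.neg_mem hy, Submodule.mem_map_of_mem hxn⟩

theorem lie_map_map_of_mem_complexPart (h : IsComplexStructure J) (hn : IsMetaabelianIdeal n)
    (hv : v ∈ n) (hx : x ∈ complexPart J n) : ⁅J v, J x⁆ = J ⁅J v, x⁆ := by
  rw [h.lie_map_map (hn.lie_eq_zero v hv x hx.1),
    hn.lie_eq_zero v hv (J x) (h.map_mem_complexPart hx).1, zero_add]

theorem lie_map_mem_complexPart (h : IsComplexStructure J) (hn : IsMetaabelianIdeal n)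
    (hv : v ∈ n) (hx : x ∈ complexPart J n) : ⁅J v, x⁆ ∈ complexPart J n := by
  refine h.mem_complexPart (hn.lie_mem _ _) ?_
  rw [← h.lie_map_map_of_mem_complexPart hn hv hx]
  exact hn.lie_mem _ _

end IsComplexStructure

theorem IsLCK.form_map_left (h : IsLCK B J θ) (x y : g) : B (J x) y = -B x (J y) := by
  rw [← h.form_map_map (J x) y, h.map_map, map_neg, LinearMap.neg_apply]

theorem disjoint_complexPart_totallyRealPart (hB : IsInnerProduct B) :
    Disjoint (complexPart J n) (totallyRealPart B J n) :=
  Submodule.disjoint_def.mpr fun x hx hxk => hB.eq_zero_of_self (hxk.2 x hx)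

theorem complexPart_sup_totallyRealPart [FiniteDimensional ℝ g] (hB : IsInnerProduct B) :
    complexPart J n ⊔ totallyRealPart B J n = n := by
  have hle : complexPart J n ≤ n := inf_le_left
  rw [totallyRealPart, inf_comm, ← sup_inf_assoc_of_le _ hle,
    (hB.isCompl_orthogonal _).sup_eq_top, top_inf_eq]

namespace IsMetaabelianLCK

theorem fundamentalForm_lie (h : IsMetaabelianLCK B J θ n) (hx : x ∈ n) (hy : y ∈ n) (z : g) :
    B (J ⁅z, x⁆) y + B (J x) ⁅z, y⁆ = -θ z * B (J x) y := by
  have hd := h.d_fundamentalForm x y z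
  rw [h.lie_eq_zero x hx y hy, h.lee_eq_zero x hx, h.lee_eq_zero y hy, ← lie_skew y z, map_neg,
    map_neg, LinearMap.neg_apply, h.form_map_left ⁅z, y⁆ x, h.symm ⁅z, y⁆] at hd
  simp only [map_zero, LinearMap.zero_apply] at hd
  linarith

theorem lie_map_mem_totallyRealPart (h : IsMetaabelianLCK B J θ n) (hv : v ∈ n)
    (hy : y ∈ totallyRealPart B J n) : ⁅J v, y⁆ ∈ totallyRealPart B J n := by
  refine ⟨h.lie_mem _ _, fun x hx => ?_⟩
  have hJx := h.map_mem_complexPart hx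
  have hω := h.fundamentalForm_lie hJx.1 hy.1 (J v)
  rw [h.lie_map_map_of_mem_complexPart h.toIsMetaabelianIdeal hv hx, h.map_map, h.map_map, map_neg,
    map_neg, LinearMap.neg_apply, LinearMap.neg_apply, LinearMap.neg_apply,
    hy.2 x hx, hy.2 _ (h.lie_map_mem_complexPart h.toIsMetaabelianIdeal hv hx)] at hω
  change B x ⁅J v, y⁆ = 0
  linarith

theorem eq_zero_of_map_mem (h : IsMetaabelianLCK B J θ n) (hx : x ∈ totallyRealPart B J n)
    (hJx : J x ∈ n) : x = 0 :=
  h.eq_zero_of_self (hx.2 x (h.mem_complexPart hx.1 hJx))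

theorem lie_map_comm (h : IsMetaabelianLCK B J θ n) (hv : v ∈ totallyRealPart B J n)
    (hw : w ∈ totallyRealPart B J n) : ⁅J v, w⁆ = ⁅J w, v⁆ := by
  refine sub_eq_zero.mp (h.eq_zero_of_map_mem
    (sub_mem (h.lie_map_mem_totallyRealPart hv.1 hw) (h.lie_map_mem_totallyRealPart hw.1 hv)) ?_)
  have hlie := h.lie_map_map (h.lie_eq_zero v hv.1 w hw.1)
  rw [← lie_skew v, neg_add_eq_sub] at hlie
  exact hlie ▸ h.lie_mem _ _

theorem lie_map_map_eq_zero (h : IsMetaabelianLCK B J θ n) (hv : v ∈ totallyRealPart B J n)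
    (hw : w ∈ totallyRealPart B J n) : ⁅J v, J w⁆ = 0 := by
  rw [h.lie_map_map (h.lie_eq_zero v hv.1 w hw.1), ← lie_skew v, h.lie_map_comm hv hw,
    neg_add_cancel, map_zero]

theorem form_lie_map (h : IsMetaabelianLCK B J θ n) (hu : u ∈ totallyRealPart B J n)
    (hv : v ∈ totallyRealPart B J n) (hw : w ∈ totallyRealPart B J n) :
    B ⁅J w, v⁆ u + θ (J w) * B u v = B ⁅J u, v⁆ w + θ (J u) * B v w := by
  have hd := h.d_fundamentalForm v (J w) (J u)
  rw [h.lie_map_map_eq_zero hw hu, h.lee_eq_zero v hv.1, ← lie_skew v (J w), map_neg, map_neg,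
    LinearMap.neg_apply, h.form_map_map, h.form_map_map, h.form_map_map, h.form_map_map, h.map_map,
    map_neg, LinearMap.neg_apply] at hd
  simp only [map_zero, LinearMap.zero_apply] at hd
  linarith

/-- The product `v * w = ⁅J v, w⁆` on `k`. -/
def totallyRealPartMul (h : IsMetaabelianLCK B J θ n) :
    totallyRealPart B J n →ₗ[ℝ] End ℝ (totallyRealPart B J n) :=
  LinearMap.mk₂ ℝ (fun v w => ⟨⁅J v, (w : g)⁆, h.lie_map_mem_totallyRealPart v.2.1 w.2⟩)
    (fun _ _ _ => by ext; simp) (fun _ _ _ => by ext; simp)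
    (fun _ _ _ => by ext; simp) (fun _ _ _ => by ext; simp)

theorem coe_totallyRealPartMul (h : IsMetaabelianLCK B J θ n) (v w : totallyRealPart B J n) :
    (h.totallyRealPartMul v w : g) = ⁅J v, (w : g)⁆ :=
  rfl

theorem totallyRealPartMul_comm (h : IsMetaabelianLCK B J θ n) (v w : totallyRealPart B J n) :
    h.totallyRealPartMul v w = h.totallyRealPartMul w v :=
  Subtype.ext (h.lie_map_comm v.2 w.2)

theorem totallyRealPartMul_mul (h : IsMetaabelianLCK B J θ n) (v w : totallyRealPart B J n) :
    h.totallyRealPartMul (h.totallyRealPartMul v w) =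
      h.totallyRealPartMul v * h.totallyRealPartMul w := by
  have hleft (x y z : totallyRealPart B J n) :
      h.totallyRealPartMul x (h.totallyRealPartMul y z) =
        h.totallyRealPartMul y (h.totallyRealPartMul x z) := by
    ext
    simp only [coe_totallyRealPartMul]
    rw [leibniz_lie, h.lie_map_map_eq_zero x.2 y.2, zero_lie, zero_add]
  ext1 x
  rw [End.mul_apply, h.totallyRealPartMul_comm w x, hleft, h.totallyRealPartMul_comm]

variable [FiniteDimensional ℝ g]

theorem trace_restrict_complexPart (h : IsMetaabelianLCK B J θ n) (hv : v ∈ n) :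
    LinearMap.trace ℝ (complexPart J n) ((LieAlgebra.ad ℝ g (J v)).restrict
        fun _ => h.lie_map_mem_complexPart h.toIsMetaabelianIdeal hv) =
      finrank ℝ (complexPart J n) * (-θ (J v) / 2) := by
  refine (h.restrict _).trace_eq_finrank_mul fun ⟨x, hx⟩ => ?_
  have hω := h.fundamentalForm_lie hx.1 (h.map_mem_complexPart hx).1 (J v)
  rw [h.lie_map_map_of_mem_complexPart h.toIsMetaabelianIdeal hv hx, h.form_map_map,
    h.form_map_map, h.form_map_map, h.symm ⁅J v, x⁆] at hω
  change B x ⁅J v, x⁆ = -θ (J v) / 2 * B x x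
  linarith

theorem trace_totallyRealPartMul (h : IsMetaabelianLCK B J θ n)
    (hunimod : ∀ x, LinearMap.trace ℝ g (LieAlgebra.ad ℝ g x) = 0) (v : totallyRealPart B J n) :
    LinearMap.trace ℝ _ (h.totallyRealPartMul v) = finrank ℝ (complexPart J n) / 2 * θ (J v) := by
  have hsplit := trace_eq_trace_restrict_add_trace_restrict
    (disjoint_complexPart_totallyRealPart h.toIsInnerProduct) (f := LieAlgebra.ad ℝ g (J v))
    (fun x => (complexPart_sup_totallyRealPart h.toIsInnerProduct).symm ▸ h.lie_mem (J v) x)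
    (fun x => h.lie_map_mem_complexPart h.toIsMetaabelianIdeal v.2.1)
    (fun x => h.lie_map_mem_totallyRealPart v.2.1)
  rw [hunimod, h.trace_restrict_complexPart v.2.1] at hsplit
  change 0 = _ + LinearMap.trace ℝ _ (h.totallyRealPartMul v) at hsplit
  linarith

theorem isLeeProduct_totallyRealPartMul (h : IsMetaabelianLCK B J θ n)
    (hunimod : ∀ x, LinearMap.trace ℝ g (LieAlgebra.ad ℝ g x) = 0) :
    IsLeeProduct (B.restrict (totallyRealPart B J n)) h.totallyRealPartMul
      ((θ ∘ₗ J).domRestrict (totallyRealPart B J n)) (finrank ℝ (complexPart J n) / 2) where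
  mul_comm := h.totallyRealPartMul_comm
  mul_mul := h.totallyRealPartMul_mul
  form_mul u v w := h.form_lie_map u.2 v.2 w.2
  trace_mul := h.trace_totallyRealPartMul hunimod

theorem lee_map_ne_zero (h : IsMetaabelianLCK B J θ n) (hθ : θ ≠ 0) (hspan : n ⊔ n.map J = ⊤) :
    (θ ∘ₗ J).domRestrict (totallyRealPart B J n) ≠ 0 := by
  intro h0
  have hJn : n ≤ (θ ∘ₗ J).ker := by
    rw [← complexPart_sup_totallyRealPart (n := n) (J := J) h.toIsInnerProduct]
    refine sup_le (fun x hx => h.lee_eq_zero _ (h.map_mem_complexPart hx).1) fun x hx => ?_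
    exact LinearMap.congr_fun h0 ⟨x, hx⟩
  refine hθ (LinearMap.ker_eq_top.mp (top_le_iff.mp (hspan ▸ sup_le h.lee_eq_zero ?_)))
  rintro _ ⟨x, hx, rfl⟩
  exact hJn hx

end IsMetaabelianLCK

end LieAlgebra

/-- For a non-Vaisman LCK structure on a unimodular meta-abelian Lie algebra
`g = m ⊕ n` with `n + J(n) = g` and `a = n ∩ J(n) ≠ 0`, the symmetric bilinear form
`κ(u₁,u₂) = tr(x ↦ ⁅u₁, ⁅u₂, x⁆⁆ : k → k)` on `J(k)` is positive definite: for every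
nonzero `u ∈ J(k)` the trace of `x ↦ ⁅u, ⁅u, x⁆⁆` on `k` is strictly positive. -/
theorem lck_killing_positive_on_Jk
    (g : Type*) [LieRing g] [LieAlgebra ℝ g] [FiniteDimensional ℝ g]
    (B : g →ₗ[ℝ] g →ₗ[ℝ] ℝ) (J : g →ₗ[ℝ] g) (θ : g →ₗ[ℝ] ℝ)
    (hBsymm : ∀ x y : g, B x y = B y x)
    (hBpos : ∀ x : g, x ≠ 0 → 0 < B x x)
    (hJ2 : ∀ x : g, J (J x) = -x)
    (hJB : ∀ x y : g, B (J x) (J y) = B x y)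
    (hJint : ∀ x y : g, ⁅x, y⁆ - ⁅J x, J y⁆ + J ⁅x, J y⁆ + J ⁅J x, y⁆ = 0)
    (hθbr : ∀ x y : g, θ ⁅x, y⁆ = 0)
    (hLCK : ∀ x y z : g,
      -(B (J ⁅x, y⁆) z) - B (J ⁅y, z⁆) x - B (J ⁅z, x⁆) y =
        θ x * B (J y) z + θ y * B (J z) x + θ z * B (J x) y)
    (m n : Submodule ℝ g)
    (hcompl : IsCompl m n)
    (hnab : ∀ x ∈ n, ∀ y ∈ n, ⁅x, y⁆ = (0 : g))
    (hnideal : ∀ x : g, ∀ y ∈ n, ⁅x, y⁆ ∈ n)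
    (hmab : ∀ x ∈ m, ∀ y ∈ m, ⁅x, y⁆ = (0 : g))
    (hunimod : ∀ x : g, LinearMap.trace ℝ g (LieAlgebra.ad ℝ g x) = 0)
    (hθ0 : θ ≠ 0)
    (hθn : ∀ x ∈ n, θ x = 0)
    (hspan : n ⊔ Submodule.map J n = ⊤)
    (ha : n ⊓ Submodule.map J n ≠ ⊥)
    (k : Submodule ℝ g)
    (hk : ∀ v : g, v ∈ k ↔ v ∈ n ∧ ∀ y ∈ n ⊓ Submodule.map J n, B v y = 0) :
    ∀ u ∈ Submodule.map J k, u ≠ 0 →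
      ∀ (h : ∀ x ∈ k, ((LieAlgebra.ad ℝ g u) ∘ₗ (LieAlgebra.ad ℝ g u)) x ∈ k),
        0 < LinearMap.trace ℝ k
          (((LieAlgebra.ad ℝ g u) ∘ₗ (LieAlgebra.ad ℝ g u)).restrict h) := by
  have hmetaLCK : IsMetaabelianLCK B J θ n :=
    { map_map := hJ2
      integrable := hJint
      symm := hBsymm
      pos := hBpos
      form_map_map := hJB
      lee_lie := hθbr
      d_fundamentalForm := hLCK
      toIsMetaabelianIdeal := .of_sup_eq_top hcompl.sup_eq_top hmab hnab hnideal
      lee_eq_zero := hθn }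
  obtain rfl : k = totallyRealPart B J n := by
    ext v
    simp only [hk, hBsymm v]
    rfl
  rintro _ ⟨v, hv, rfl⟩ hJv _
  have hfinrank : (0 : ℝ) < finrank ℝ (complexPart J n) / 2 :=
    half_pos (Nat.cast_pos.mpr (Submodule.one_le_finrank_iff.mpr ha))
  refine (hmetaLCK.isLeeProduct_totallyRealPartMul hunimod).trace_mul_mul_self_pos
    (hmetaLCK.restrict _) hfinrank (hmetaLCK.lee_map_ne_zero hθ0 hspan) (v := ⟨v, hv⟩) ?_
  exact fun hv0 => hJv ((congrArg J (congrArg Subtype.val hv0)).trans (map_zero J))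
end
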